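/- arXiv:cs/0202018 — 4 statements merged into one kernel-verified Lean document; each statement's English description precedes it below -/
import Mathlib

section
/- Let L be a nonempty set and C : 2^L → 2^L. There exist a set M (of models) and a binary relation ⊨ ⊆ M × L such that C(A) = Th(Mod(A)) for every A ⊆ L if and only if C satisfies Inclusion (A ⊆ C(A) for all A ⊆ L), Idempotence (C(C(A)) = C(A) for all A ⊆ L), and Monotonicity (A ⊆ B implies C(A) ⊆ C(B)). -/
/-- Mod(A): the set of models satisfying every formula in A. -/
def ModSet {M L : Type} (sat : M → L → Prop) (A : Set L) : Set M :=
  {x | ∀ a ∈ A, sat x a}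

/-- Th(X): the set of formulas satisfied in every model of X. -/
def ThSet {M L : Type} (sat : M → L → Prop) (X : Set M) : Set L :=
  {a | ∀ x ∈ X, sat x a}

/-- Tarski's characterization of monotonic consequence operations. -/
theorem stmt_0 (L : Type) [Nonempty L] (C : Set L → Set L) :
    (∃ (M : Type) (sat : M → L → Prop),
        ∀ A : Set L, C A = ThSet sat (ModSet sat A)) ↔
    ((∀ A : Set L, A ⊆ C A) ∧
     (∀ A : Set L, C (C A) = C A) ∧
     (∀ A B : Set L, A ⊆ B → C A ⊆ C B)) := by
  constructor
  · rintro ⟨M, sat, h⟩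
    refine ⟨?_, ?_, ?_⟩
    · intro A a ha
      rw [h]
      exact fun x hx => hx a ha
    · intro A
      rw [h (C A), h A]
      apply Set.Subset.antisymm
      · intro a ha x hx
        exact ha x (fun b hb => hb x hx)
      · intro a ha x hx
        exact hx a ha
    · intro A B hAB a ha
      rw [h] at ha ⊢
      exact fun x hx => ha x (fun b hb => hx b (hAB hb))
  · rintro ⟨h1, h2, h3⟩
    refine ⟨Set L, fun X a => a ∈ C X, fun A => ?_⟩
    apply Set.Subset.antisymm
    · intro a ha X hX
      have h := h3 A (C X) hX ha
      rwa [h2] at h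
    · intro a ha
      exact ha A (fun b hb => h1 A hb)
end

section
/- Let L be a nonempty set and C : 2^L → 2^L. The following are equivalent: (1) C satisfies Inclusion (A ⊆ C(A)), Idempotence (C(C(A)) = C(A)), Cautious Monotonicity (A ⊆ B ⊆ C(A) implies C(A) ⊆ C(B)), Conditional Monotonicity (C(A ∪ B) ⊆ C(C(A) ∪ B)), and Threshold Monotonicity (C(A) ⊆ B ⊆ B' implies C(B) ⊆ C(B')); (2) there exist a set M, a binary relation ⊨ ⊆ M × L, and a function f from definable subsets of M to subsets of M such that f preserves definability (f(Mod(A)) = Mod(Th(f(Mod(A)))) for all A ⊆ L), f satisfies Contraction, Coherence and Local Monotonicity on definable sets, and C(A) = Th(f(Mod(A))) for all A ⊆ L. -/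
/-- A set of models is definable iff it is the set of models of its theory. -/
def IsDefinable {M L : Type} (sat : M → L → Prop) (X : Set M) : Prop :=
  X = ModSet sat (ThSet sat X)

/-- Main representation theorem: the five conditions on C characterize the
operations defined by definability-preserving choice functions satisfying
Contraction, Coherence and Local Monotonicity on definable sets. -/
theorem stmt_8 (L : Type) [Nonempty L] (C : Set L → Set L) :
    ((∀ A : Set L, A ⊆ C A) ∧
     (∀ A : Set L, C (C A) = C A) ∧
     (∀ A B : Set L, A ⊆ B → B ⊆ C A → C A ⊆ C B) ∧
     (∀ A B : Set L, C (A ∪ B) ⊆ C (C A ∪ B)) ∧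
     (∀ A B B' : Set L, C A ⊆ B → B ⊆ B' → C B ⊆ C B')) ↔
    (∃ (M : Type) (sat : M → L → Prop) (f : Set M → Set M),
      (∀ A : Set L, f (ModSet sat A) = ModSet sat (ThSet sat (f (ModSet sat A)))) ∧
      (∀ X : Set M, IsDefinable sat X → f X ⊆ X) ∧
      (∀ X Y : Set M, IsDefinable sat X → IsDefinable sat Y →
        X ⊆ Y → X ∩ f Y ⊆ f X) ∧
      (∀ X Y : Set M, IsDefinable sat X → IsDefinable sat Y →
        f X ⊆ Y → Y ⊆ X → f Y ⊆ f X) ∧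
      (∀ A : Set L, C A = ThSet sat (f (ModSet sat A)))) := by
  constructor
  · rintro ⟨inc, idem, cm, cond, thr⟩
    have hcum : ∀ A B : Set L, A ⊆ B → B ⊆ C A → C B = C A := by
      intro A B h1 h2
      apply Set.Subset.antisymm _ (cm A B h1 h2)
      have h := cond A B
      rwa [Set.union_eq_self_of_subset_left h1, Set.union_eq_self_of_subset_right h2, idem] at h
    let M := {T : Set L // C T = T}
    let sat : M → L → Prop := fun T a => a ∈ T.1
    let f : Set M → Set M := fun X => {T | C (ThSet sat X) ⊆ T.1}
    have hTh : ∀ A : Set L, C (ThSet sat (ModSet sat A)) = C A := by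
      intro A
      apply hcum
      · intro a ha x hx
        exact hx a ha
      · intro a ha
        exact ha ⟨C A, idem A⟩ (fun b hb => inc A hb)
    have hThf : ∀ X : Set M, ThSet sat (f X) = C (ThSet sat X) := by
      intro X
      apply Set.Subset.antisymm
      · intro a ha
        exact ha ⟨C (ThSet sat X), idem _⟩ (fun b hb => hb)
      · intro a ha T hT
        exact hT ha
    refine ⟨M, sat, f, ?_, ?_, ?_, ?_, ?_⟩
    · intro A
      rw [hThf]
      rfl
    · intro X hX T hT
      rw [hX]
      intro a ha
      exact hT (inc _ ha)
    · rintro X Y hX hY hXY T ⟨hT, hTY⟩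
      have hTX : ThSet sat X ⊆ T.1 := fun a ha => ha T hT
      have hsub : ThSet sat Y ⊆ ThSet sat X := fun a ha x hx => ha x (hXY hx)
      have h1 := cond (ThSet sat Y) (ThSet sat X)
      rw [Set.union_eq_self_of_subset_left hsub] at h1
      have h2 := thr (ThSet sat Y) (C (ThSet sat Y) ∪ ThSet sat X) T.1
        Set.subset_union_left (Set.union_subset hTY hTX)
      rw [T.2] at h2
      exact h1.trans h2
    · intro X Y hX hY h1 h2 T hT
      have hsub : ThSet sat X ⊆ ThSet sat Y := fun a ha x hx => ha x (h2 hx)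
      have hsub2 : ThSet sat Y ⊆ C (ThSet sat X) := by
        rw [← hThf]
        exact fun a ha x hx => ha x (h1 hx)
      exact (cm _ _ hsub hsub2).trans hT
    · intro A
      rw [hThf, hTh]
  · rintro ⟨M, sat, f, dp, con, coh, lm, hC⟩
    have hdef : ∀ A : Set L, IsDefinable sat (ModSet sat A) := by
      intro A
      apply Set.Subset.antisymm
      · intro x hx a ha
        exact ha x hx
      · intro x hx a ha
        exact hx a (fun y hy => hy a ha)
    have hMC : ∀ A : Set L, ModSet sat (C A) = f (ModSet sat A) := by
      intro A
      rw [hC, ← dp]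
    have anti : ∀ A B : Set L, A ⊆ B → ModSet sat B ⊆ ModSet sat A :=
      fun A B h x hx a ha => hx a (h ha)
    have tanti : ∀ X Y : Set M, X ⊆ Y → ThSet sat Y ⊆ ThSet sat X :=
      fun X Y h a ha x hx => ha x (h hx)
    have hfix : ∀ A B : Set L, C A ⊆ B → f (ModSet sat B) = ModSet sat B := by
      intro A B h
      have h1 : ModSet sat B ⊆ f (ModSet sat A) := by
        rw [← hMC]
        exact anti _ _ h
      apply Set.Subset.antisymm (con _ (hdef B))
      intro x hx
      exact coh _ _ (hdef B) (hdef A) (h1.trans (con _ (hdef A))) ⟨hx, h1 hx⟩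
    refine ⟨?_, ?_, ?_, ?_, ?_⟩
    · intro A a ha
      rw [hC]
      intro x hx
      exact con _ (hdef A) hx a ha
    · intro A
      rw [hC (C A), hfix A (C A) subset_rfl, hMC, ← hC]
    · intro A B h1 h2
      rw [hC A, hC B]
      apply tanti
      apply lm _ _ (hdef A) (hdef B) _ (anti _ _ h1)
      rw [← hMC]
      exact anti _ _ h2
    · intro A B
      rw [hC (A ∪ B), hC (C A ∪ B)]
      apply tanti
      rw [hfix A (C A ∪ B) Set.subset_union_left]
      intro x hx
      have hxA : x ∈ f (ModSet sat A) := by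
        rw [← hMC]
        exact anti _ _ Set.subset_union_left hx
      refine coh _ _ (hdef _) (hdef A) (anti _ _ Set.subset_union_left) ⟨?_, hxA⟩
      rintro a (ha | ha)
      · exact con _ (hdef A) hxA a ha
      · exact hx a (Or.inr ha)
    · intro A B B' h1 h2
      rw [hC B, hC B', hfix A B h1, hfix A B' (h1.trans h2)]
      exact tanti _ _ (anti _ _ h2)
end

section
/- Let L be a set and C : 2^L → 2^L satisfy Inclusion (A ⊆ C(A)), Idempotence (C(C(A)) = C(A)) and Cautious Monotonicity (A ⊆ B ⊆ C(A) implies C(A) ⊆ C(B)). Define Cn(A) = ⋂_{B ⊆ L} C(A ∪ B). Then Right Absorption holds: C(Cn(A)) = C(A) for every A ⊆ L. -/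
/-- Right Absorption: C(Cn(A)) = C(A), where Cn(A) = ⋂_{B ⊆ L} C(A ∪ B). -/
theorem stmt_13 {L : Type} (C : Set L → Set L)
    (hIncl : ∀ A : Set L, A ⊆ C A)
    (hIdem : ∀ A : Set L, C (C A) = C A)
    (hCM : ∀ A B : Set L, A ⊆ B → B ⊆ C A → C A ⊆ C B) :
    ∀ A : Set L, C (⋂ B : Set L, C (A ∪ B)) = C A := by
  intro A
  have h1 : A ⊆ ⋂ B : Set L, C (A ∪ B) :=
    Set.subset_iInter fun B => Set.subset_union_left.trans (hIncl _)
  have h2 : (⋂ B : Set L, C (A ∪ B)) ⊆ C A := by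
    have h := Set.iInter_subset (fun B : Set L => C (A ∪ B)) ∅
    simpa only [Set.union_empty] using h
  have h3 := hCM _ _ h1 h2
  have h4 := hCM _ _ h2 h3
  rw [hIdem] at h4
  exact Set.Subset.antisymm h4 h3
end

section
/- Let M be a set. (i) If a binary relation > on 2^M satisfies W ⊇ X > Y ⊇ Z implies W > Z, and Modularity (X > Y and not X > Z imply Z > Y), then the function f defined by letting f(X) be the set of heavy elements of X satisfies Arrow: X ⊆ Y and X ∩ f(Y) ≠ ∅ imply f(X) ⊆ f(Y). (ii) If f : 2^M → 2^M satisfies Contraction, Coherence, Local Monotonicity and Arrow, then the relation > defined by X > Y iff f(X) ≠ ∅ and Y ∩ f(X ∪ Y) = ∅ satisfies Modularity. -/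
/-- Modularity of a qualitative measure corresponds to Arrow's condition on
the associated choice function, in both directions. -/
theorem stmt_19 (M : Type) :
    (∀ gt : Set M → Set M → Prop,
      (∀ W X Y Z : Set M, X ⊆ W → gt X Y → Z ⊆ Y → gt W Z) →
      (∀ X Y Z : Set M, gt X Y → ¬ gt X Z → gt Z Y) →
      ∀ X Y : Set M, X ⊆ Y →
        X ∩ {y ∈ Y | ¬ gt Y {y}} ≠ ∅ →
        {x ∈ X | ¬ gt X {x}} ⊆ {y ∈ Y | ¬ gt Y {y}}) ∧
    (∀ f : Set M → Set M,
      (∀ X : Set M, f X ⊆ X) →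
      (∀ X Y : Set M, X ⊆ Y → X ∩ f Y ⊆ f X) →
      (∀ X Y : Set M, f X ⊆ Y → Y ⊆ X → f Y ⊆ f X) →
      (∀ X Y : Set M, X ⊆ Y → X ∩ f Y ≠ ∅ → f X ⊆ f Y) →
      ∀ X Y Z : Set M,
        (f X ≠ ∅ ∧ Y ∩ f (X ∪ Y) = ∅) →
        ¬ (f X ≠ ∅ ∧ Z ∩ f (X ∪ Z) = ∅) →
        (f Z ≠ ∅ ∧ Y ∩ f (Z ∪ Y) = ∅)) := by
  constructor
  · intro gt mono modu X Y hXY hne x hx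
    obtain ⟨z, hzX, hzY, hz⟩ := Set.nonempty_iff_ne_empty.mpr hne
    refine ⟨hXY hx.1, fun h => hx.2 ?_⟩
    exact mono X {z} {x} {x} (by simpa using hzX) (modu Y {x} {z} h hz) (le_refl _)
  · intro f contr coh lm arrow X Y Z h1 h2
    obtain ⟨hX, hY⟩ := h1
    have hZ : Z ∩ f (X ∪ Z) ≠ ∅ := fun h => h2 ⟨hX, h⟩
    obtain ⟨z, hzZ, hzf⟩ := Set.nonempty_iff_ne_empty.mpr hZ
    refine ⟨Set.nonempty_iff_ne_empty.mp
      ⟨z, coh Z (X ∪ Z) Set.subset_union_right ⟨hzZ, hzf⟩⟩, ?_⟩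
    rw [Set.eq_empty_iff_forall_notMem]
    rintro y ⟨hyY, hyf⟩
    have hXU : X ⊆ X ∪ Y ∪ Z := fun a ha => Or.inl (Or.inl ha)
    have hXYU : X ∪ Y ⊆ X ∪ Y ∪ Z := Set.subset_union_left
    have hZYU : Z ∪ Y ⊆ X ∪ Y ∪ Z := by
      rintro a (ha | ha)
      · exact Or.inr ha
      · exact Or.inl (Or.inr ha)
    have hXZU : X ∪ Z ⊆ X ∪ Y ∪ Z := by
      rintro a (ha | ha)
      · exact Or.inl (Or.inl ha)
      · exact Or.inr ha
    -- f of the whole union does not meet Z ∪ Y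
    have key : ∀ a ∈ Z ∪ Y, a ∉ f (X ∪ Y ∪ Z) := by
      intro a ha haf
      have hyU : y ∈ f (X ∪ Y ∪ Z) :=
        arrow _ _ hZYU (Set.nonempty_iff_ne_empty.mp ⟨a, ha, haf⟩) hyf
      have : y ∈ Y ∩ f (X ∪ Y) := ⟨hyY, coh _ _ hXYU ⟨Or.inr hyY, hyU⟩⟩
      rw [hY] at this
      exact this
    have hfX : f (X ∪ Y ∪ Z) ⊆ X := by
      intro a ha
      rcases contr _ ha with (h | h) | h
      · exact h
      · exact absurd ha (key a (Or.inr h))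
      · exact absurd ha (key a (Or.inl h))
    obtain ⟨x, hx⟩ := Set.nonempty_iff_ne_empty.mpr hX
    have hxU := lm _ _ hfX hXU hx
    exact key z (Or.inl hzZ) (arrow _ _ hXZU
      (Set.nonempty_iff_ne_empty.mp ⟨x, Or.inl (hfX hxU), hxU⟩) hzf)
end
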